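/- Let 0 ≤ s < 1 and 1/(2-s) ≤ q < 1. Then the map (A, B) ↦ tr[(B* A^{-s} B)^q] is jointly convex on pairs of (positive definite A ∈ M_n(ℂ), B ∈ M_n(ℂ)). -/

import Mathlib

open Matrix
open scoped ComplexOrder

/-- Real power of a matrix, defined spectrally for Hermitian matrices (junk value `0` otherwise). -/
noncomputable def mpow {k : ℕ} (A : Matrix (Fin k) (Fin k) ℂ) (p : ℝ) : Matrix (Fin k) (Fin k) ℂ :=
  if hA : A.IsHermitian then
    (hA.eigenvectorUnitary : Matrix (Fin k) (Fin k) ℂ) *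
      Matrix.diagonal (fun i => ((hA.eigenvalues i ^ p : ℝ) : ℂ)) *
      (hA.eigenvectorUnitary : Matrix (Fin k) (Fin k) ℂ)ᴴ
  else 0

/-- A Schwarz map: `Φ(K*K) ≥ Φ(K)*Φ(K)` for all `K`. -/
def IsSchwarz {a b : ℕ} (Φ : Matrix (Fin a) (Fin a) ℂ →ₗ[ℂ] Matrix (Fin b) (Fin b) ℂ) : Prop :=
  ∀ K, (Φ (Kᴴ * K) - (Φ K)ᴴ * Φ K).PosSemidef

/-- A positive map: sends positive semidefinite matrices to positive semidefinite matrices. -/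
def IsPositiveMap {a b : ℕ} (Φ : Matrix (Fin a) (Fin a) ℂ →ₗ[ℂ] Matrix (Fin b) (Fin b) ℂ) : Prop :=
  ∀ X, X.PosSemidef → (Φ X).PosSemidef

/-- `Ψ` is the Hilbert–Schmidt adjoint of `Φ`: `⟨X, Φ Y⟩ = ⟨Ψ X, Y⟩`. -/
def IsHSAdjoint {a b : ℕ} (Φ : Matrix (Fin a) (Fin a) ℂ →ₗ[ℂ] Matrix (Fin b) (Fin b) ℂ)
    (Ψ : Matrix (Fin b) (Fin b) ℂ →ₗ[ℂ] Matrix (Fin a) (Fin a) ℂ) : Prop :=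
  ∀ X Y, (Xᴴ * Φ Y).trace = ((Ψ X)ᴴ * Y).trace

/-!
For `0 < q ≤ 1` and `Y` positive semidefinite, `tr (Y ^ q)` is the infimum over positive definite
`Z` of `q * tr (Y * Z ^ (-t)) + (1 - q) * tr Z`, where `t = 1 / q - 1`. At `Y = Bᴴ * A ^ (-s) * B`
the condition `1 / (2 - s) ≤ q` reads `s + t ≤ 1`, so by Lieb's theorem this expression is jointly
convex in `(A, B, Z)`, and minimizing it over `Z` leaves a convex function of `(A, B)`.

Lieb's theorem is obtained following Ando. For fixed positive definite matrices, the exponents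
`(s, t)` at which `A ^ s ⊗ₖ Z ^ t` satisfies the concavity inequality form a closed set, which is
stable under midpoints because geometric means are monotone and superadditive, and which contains
`(0, 0)`, `(1, 0)` and `(0, 1)`. Since `Xᴴ * P⁻¹ * X` is jointly convex in `(X, P)` and antitone
in `P`, the trace function of Lieb's theorem, which has this form with `P = (Zᵀ) ^ t ⊗ₖ A ^ s` and
`X = vec B`, is convex.
-/

section SpectralPowers

open scoped MatrixOrder Matrix.Norms.L2Operator Kronecker

section SchurComplement

variable {𝕜 m n : Type*} [RCLike 𝕜]

lemma posSemidef_fromBlocks_zero [Finite m] [Finite n] {P : Matrix m m 𝕜} (hP : P.PosSemidef) :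
    (fromBlocks P 0 0 (0 : Matrix n n 𝕜)).PosSemidef := by
  classical
  have := Fintype.ofFinite m
  have h := hP.conjTranspose_mul_mul_same (fromCols (1 : Matrix m m 𝕜) (0 : Matrix m n 𝕜))
  rwa [conjTranspose_fromCols_eq_fromRows_conjTranspose, fromRows_mul, fromRows_mul_fromCols,
    conjTranspose_one, conjTranspose_zero, Matrix.one_mul, Matrix.mul_one, Matrix.mul_zero,
    Matrix.zero_mul, Matrix.zero_mul, Matrix.zero_mul] at h

variable [Fintype m] [DecidableEq m] [Finite n]

lemma posSemidef_fromBlocks_conjTranspose_mul_inv_mul {P : Matrix m m 𝕜} (hP : P.PosDef)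
    (X : Matrix m n 𝕜) : (fromBlocks P X Xᴴ (Xᴴ * P⁻¹ * X)).PosSemidef := by
  have := hP.isUnit.invertible
  simp only [hP.fromBlocks₁₁, sub_self, PosSemidef.zero]

lemma conjTranspose_mul_inv_mul_le {P₁ P₂ P : Matrix m m 𝕜} (hP₁ : P₁.PosDef) (hP₂ : P₂.PosDef)
    (hP : P.PosDef) (X₁ X₂ : Matrix m n 𝕜) {a b : ℝ} (ha : 0 ≤ a) (hb : 0 ≤ b)
    (hle : a • P₁ + b • P₂ ≤ P) :
    (a • X₁ + b • X₂)ᴴ * P⁻¹ * (a • X₁ + b • X₂) ≤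
      a • (X₁ᴴ * P₁⁻¹ * X₁) + b • (X₂ᴴ * P₂⁻¹ * X₂) := by
  have := hP.isUnit.invertible
  -- The claim is that the Schur complement of `P` in the following block matrix is nonnegative.
  have hblock := (((posSemidef_fromBlocks_conjTranspose_mul_inv_mul hP₁ X₁).smul ha).add
    ((posSemidef_fromBlocks_conjTranspose_mul_inv_mul hP₂ X₂).smul hb)).add
    (posSemidef_fromBlocks_zero (n := n) (Matrix.le_iff.1 hle))
  rw [Matrix.le_iff, ← hP.fromBlocks₁₁]
  simpa only [fromBlocks_smul, fromBlocks_add, conjTranspose_add, conjTranspose_smul,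
    star_trivial, add_zero, add_sub_cancel] using hblock

end SchurComplement

lemma le_of_mul_self_le_mul_self {A : Type*} [CStarAlgebra A] [PartialOrder A] [StarOrderedRing A]
    {a b : A} (ha : IsSelfAdjoint a) (hb : 0 ≤ b) (h : a * a ≤ b * b) : a ≤ b := by
  calc a ≤ CFC.abs a := by
        rw [← sub_nonneg, CFC.abs_sub_self a, two_nsmul]
        exact add_nonneg (CFC.negPart_nonneg a) (CFC.negPart_nonneg a)
    _ = CFC.sqrt (a * a) := by rw [CFC.abs, ha.star_eq]
    _ ≤ CFC.sqrt (b * b) := CFC.sqrt_le_sqrt _ _ h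
    _ = b := CFC.sqrt_mul_self b

section GeometricMean

variable {𝕜 m : Type*} [RCLike 𝕜] [Fintype m]

lemma posDef_mul_self {S : Matrix m m 𝕜} (hS : S.PosDef) : (S * S).PosDef := by
  classical
  simpa only [hS.isHermitian.eq] using
    PosDef.conjTranspose_mul_self S (mulVec_injective_of_isUnit hS.isUnit)

lemma conjTranspose_mul_inv_mul_self_mul_eq_mul_self [DecidableEq m] {R T : Matrix m m 𝕜}
    (hR : R.PosDef) (hT : T.IsHermitian) : (R * T)ᴴ * (R * R)⁻¹ * (R * T) = T * T := by
  have := hR.isUnit.invertible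
  rw [conjTranspose_mul, hT.eq, hR.isHermitian.eq, Matrix.mul_inv_rev]
  simp only [Matrix.mul_assoc, mul_inv_cancel_left_of_invertible,
    inv_mul_cancel_left_of_invertible]

/-- `R * T` is the geometric mean of the commuting matrices `R * R` and `T * T`. -/
lemma smul_mul_add_smul_mul_le_mul {R R₁ R₂ T T₁ T₂ : Matrix m m ℂ}
    (hR : R.PosDef) (hR₁ : R₁.PosDef) (hR₂ : R₂.PosDef)
    (hT : T.PosSemidef) (hT₁ : T₁.IsHermitian) (hT₂ : T₂.IsHermitian)
    (hRT : Commute R T) (hRT₁ : Commute R₁ T₁) (hRT₂ : Commute R₂ T₂)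
    {a b : ℝ} (ha : 0 ≤ a) (hb : 0 ≤ b)
    (hRle : a • (R₁ * R₁) + b • (R₂ * R₂) ≤ R * R)
    (hTle : a • (T₁ * T₁) + b • (T₂ * T₂) ≤ T * T) :
    a • (R₁ * T₁) + b • (R₂ * T₂) ≤ R * T := by
  classical
  have := hR.isUnit.invertible
  set N := a • (R₁ * T₁) + b • (R₂ * T₂) with hN_def
  have hN : IsSelfAdjoint N :=
    ((IsSelfAdjoint.all a).smul ((IsSelfAdjoint.commute_iff hR₁.isHermitian hT₁).1 hRT₁)).add
      ((IsSelfAdjoint.all b).smul ((IsSelfAdjoint.commute_iff hR₂.isHermitian hT₂).1 hRT₂))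
  have hN_le : N * (R * R)⁻¹ * N ≤ T * T := by
    have h := conjTranspose_mul_inv_mul_le (posDef_mul_self hR₁) (posDef_mul_self hR₂)
      (posDef_mul_self hR) (R₁ * T₁) (R₂ * T₂) ha hb hRle
    rw [conjTranspose_mul_inv_mul_self_mul_eq_mul_self hR₁ hT₁,
      conjTranspose_mul_inv_mul_self_mul_eq_mul_self hR₂ hT₂, ← hN_def,
      ← star_eq_conjTranspose, hN.star_eq] at h
    exact h.trans hTle
  have hRinv : IsSelfAdjoint R⁻¹ := hR.inv.isHermitian
  have hTR : 0 ≤ T * R⁻¹ := by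
    have h := hRinv.conjugate_nonneg (hRT.mul_nonneg hR.posSemidef.nonneg hT.nonneg)
    rwa [inv_mul_cancel_left_of_invertible] at h
  have hTR' : R⁻¹ * T = T * R⁻¹ := by
    have h := (IsSelfAdjoint.of_nonneg hTR).star_eq
    rwa [star_mul, hRinv.star_eq, hT.nonneg.isSelfAdjoint.star_eq] at h
  have hsq : (R⁻¹ * N * R⁻¹) * (R⁻¹ * N * R⁻¹) ≤ (T * R⁻¹) * (T * R⁻¹) := by
    have h := hRinv.conjugate_le_conjugate hN_le
    rw [← Matrix.mul_assoc R⁻¹ T, hTR', Matrix.mul_inv_rev] at h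
    simpa only [Matrix.mul_assoc] using h
  have hle := hR.isHermitian.isSelfAdjoint.conjugate_le_conjugate <|
    le_of_mul_self_le_mul_self (hN.conjugate_self hRinv) hTR hsq
  simpa only [Matrix.mul_assoc, inv_mul_of_invertible, Matrix.mul_one,
    mul_inv_cancel_left_of_invertible] using hle

end GeometricMean

lemma convex_of_isClosed_of_midpoint_mem {E : Type*} [AddCommGroup E] [Module ℝ E]
    [TopologicalSpace E] [IsTopologicalAddGroup E] [ContinuousSMul ℝ E] {s : Set E}
    (hs : IsClosed s) (hmid : ∀ x ∈ s, ∀ y ∈ s, midpoint ℝ x y ∈ s) : Convex ℝ s := by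
  rw [convex_iff_segment_subset]
  rintro x hx y hy z hz
  rw [segment_eq_image_lineMap] at hz
  obtain ⟨t, ⟨ht₀, ht₁⟩, rfl⟩ := hz
  set C : Set ℝ := AffineMap.lineMap x y ⁻¹' s
  have hC : IsClosed C := hs.preimage AffineMap.lineMap_continuous
  have hC₀ : (0 : ℝ) ∈ C := by simpa [C] using hx
  have hC₁ : (1 : ℝ) ∈ C := by simpa [C] using hy
  -- `(α, β)` is the gap of `C` around `t`, unless `t ∈ C`.
  obtain ⟨α, ⟨hαC, hα₀, hαt⟩, hα⟩ :=
    (isCompact_Icc.inter_left hC).exists_isGreatest ⟨0, hC₀, le_rfl, ht₀⟩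
  obtain ⟨β, ⟨hβC, htβ, hβ₁⟩, hβ⟩ :=
    (isCompact_Icc.inter_left hC).exists_isLeast ⟨1, hC₁, ht₁, le_rfl⟩
  have hmidC : (α + β) / 2 ∈ C := by
    have h := hmid _ hαC _ hβC
    rwa [← AffineMap.map_midpoint, midpoint_eq_smul_add, invOf_eq_inv, smul_eq_mul,
      inv_mul_eq_div] at h
  have ht : t = α ∨ t = β := by
    rcases le_total ((α + β) / 2) t with h | h
    · have := hα ⟨hmidC, by linarith, h⟩
      exact .inl (by linarith)
    · have := hβ ⟨hmidC, h, by linarith⟩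
      exact .inr (by linarith)
  rcases ht with rfl | rfl
  exacts [hαC, hβC]

section Powers

variable {m n : Type*} [Fintype m] [DecidableEq m] [Fintype n] [DecidableEq n]

lemma posDef_rpow {A : Matrix m m ℂ} (hA : A.PosDef) (s : ℝ) : (A ^ s).PosDef :=
  (hA.isStrictlyPositive.rpow A s).posDef

lemma inv_rpow_eq_rpow_neg {A : Matrix m m ℂ} (hA : A.PosDef) (s : ℝ) : (A ^ s)⁻¹ = A ^ (-s) :=
  inv_eq_left_inv (CFC.rpow_neg_mul_rpow s hA.isStrictlyPositive)

lemma continuous_const_rpow {A : Matrix m m ℂ} (hA : A.PosDef) :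
    Continuous fun s : ℝ ↦ A ^ s := by
  simp only [CFC.rpow_eq_cfc_real hA.posSemidef.nonneg, hA.isHermitian.cfc_eq, IsHermitian.cfc,
    Unitary.conjStarAlgAut_apply]
  have hpow (i : m) : Continuous fun s : ℝ ↦ hA.isHermitian.eigenvalues i ^ s :=
    continuous_const.rpow continuous_id fun _ ↦ .inl (hA.eigenvalues_pos i).ne'
  refine (continuous_const.mul (Continuous.matrix_diagonal ?_)).mul continuous_const
  exact continuous_pi fun i ↦ RCLike.continuous_ofReal.comp (hpow i)

lemma transpose_cfc {A : Matrix m m ℂ} (hA : A.IsHermitian) (f : ℝ → ℝ) :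
    (cfc f A)ᵀ = cfc f Aᵀ := by
  -- Transposition reverses products, but on Hermitian matrices it is entrywise conjugation.
  let φ : Matrix m m ℂ →⋆ₐ[ℝ] Matrix m m ℂ :=
    { Complex.conjAe.toAlgHom.mapMatrix with map_star' := fun _ ↦ rfl }
  have hφ {B : Matrix m m ℂ} (hB : B.IsHermitian) : φ B = Bᵀ := by
    ext i j
    exact hB.apply j i
  have hφA : IsSelfAdjoint (φ A) := hφ hA ▸ hA.transpose
  have hφ_cont : Continuous φ := φ.toAlgHom.toLinearMap.continuous_of_finiteDimensional
  rw [← hφ (cfc_predicate f A), ← hφ hA]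
  exact φ.map_cfc f A (A.finite_real_spectrum.continuousOn f) hφ_cont hA hφA

lemma transpose_rpow {A : Matrix m m ℂ} (hA : A.PosSemidef) (s : ℝ) : (A ^ s)ᵀ = Aᵀ ^ s := by
  rw [CFC.rpow_eq_cfc_real hA.nonneg, CFC.rpow_eq_cfc_real hA.transpose.nonneg,
    transpose_cfc hA.isHermitian]

lemma posDef_rpow_kronecker_rpow {A : Matrix m m ℂ} {Z : Matrix n n ℂ} (hA : A.PosDef)
    (hZ : Z.PosDef) (s t : ℝ) : ((A ^ s) ⊗ₖ (Z ^ t)).PosDef :=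
  (posDef_rpow hA s).kronecker (posDef_rpow hZ t)

lemma continuous_rpow_kronecker_rpow {A : Matrix m m ℂ} {Z : Matrix n n ℂ} (hA : A.PosDef)
    (hZ : Z.PosDef) : Continuous fun p : ℝ × ℝ ↦ (A ^ p.1) ⊗ₖ (Z ^ p.2) :=
  continuous_matrix fun i j ↦
    (((continuous_const_rpow hA).comp continuous_fst).matrix_elem i.1 j.1).mul
      (((continuous_const_rpow hZ).comp continuous_snd).matrix_elem i.2 j.2)

lemma rpow_kronecker_rpow_mul {A : Matrix m m ℂ} {Z : Matrix n n ℂ} (hA : A.PosDef)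
    (hZ : Z.PosDef) (s s' t t' : ℝ) :
    ((A ^ s) ⊗ₖ (Z ^ t)) * ((A ^ s') ⊗ₖ (Z ^ t')) = (A ^ (s + s')) ⊗ₖ (Z ^ (t + t')) := by
  rw [← mul_kronecker_mul, CFC.rpow_add hA.isUnit, CFC.rpow_add hZ.isUnit]

lemma commute_rpow_kronecker_rpow {A : Matrix m m ℂ} {Z : Matrix n n ℂ} (hA : A.PosDef)
    (hZ : Z.PosDef) (s s' t t' : ℝ) : Commute ((A ^ s) ⊗ₖ (Z ^ t)) ((A ^ s') ⊗ₖ (Z ^ t')) := by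
  rw [commute_iff_eq, rpow_kronecker_rpow_mul hA hZ, rpow_kronecker_rpow_mul hA hZ, add_comm s,
    add_comm t]

end Powers

lemma convex_setOf_posDef {𝕜 m : Type*} [RCLike 𝕜] :
    Convex ℝ {A : Matrix m m 𝕜 | A.PosDef} := by
  rintro A₁ hA₁ A₂ hA₂ a b ha hb hab
  rcases ha.eq_or_lt with rfl | ha
  · simpa [(zero_add b).symm.trans hab] using hA₂
  · exact (hA₁.smul ha).add_posSemidef (hA₂.posSemidef.smul hb)

lemma re_trace_mono {m : Type*} [Fintype m] {X Y : Matrix m m ℂ} (h : X ≤ Y) :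
    X.trace.re ≤ Y.trace.re := by
  have := Complex.re_le_re (Matrix.le_iff.1 h).trace_nonneg
  rwa [trace_sub, Complex.sub_re, Complex.zero_re, sub_nonneg] at this

section AndoLieb

variable {m n : Type*} [Fintype m] [DecidableEq m] [Fintype n] [DecidableEq n]

lemma convex_setOf_smul_rpow_kronecker_rpow_le {A₁ A₂ A : Matrix m m ℂ} {Z₁ Z₂ Z : Matrix n n ℂ}
    (hA₁ : A₁.PosDef) (hA₂ : A₂.PosDef) (hA : A.PosDef) (hZ₁ : Z₁.PosDef) (hZ₂ : Z₂.PosDef)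
    (hZ : Z.PosDef) {a b : ℝ} (ha : 0 ≤ a) (hb : 0 ≤ b) :
    Convex ℝ {p : ℝ × ℝ | a • ((A₁ ^ p.1) ⊗ₖ (Z₁ ^ p.2)) + b • ((A₂ ^ p.1) ⊗ₖ (Z₂ ^ p.2)) ≤
      (A ^ p.1) ⊗ₖ (Z ^ p.2)} := by
  apply convex_of_isClosed_of_midpoint_mem
  · exact isClosed_le (((continuous_rpow_kronecker_rpow hA₁ hZ₁).const_smul a).add
      ((continuous_rpow_kronecker_rpow hA₂ hZ₂).const_smul b))
      (continuous_rpow_kronecker_rpow hA hZ)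
  · rintro ⟨s, t⟩ hst ⟨s', t'⟩ hst'
    have hsq {A : Matrix m m ℂ} {Z : Matrix n n ℂ} (hA : A.PosDef) (hZ : Z.PosDef) (s t : ℝ) :
        ((A ^ (s / 2)) ⊗ₖ (Z ^ (t / 2))) * ((A ^ (s / 2)) ⊗ₖ (Z ^ (t / 2))) =
          (A ^ s) ⊗ₖ (Z ^ t) := by
      rw [rpow_kronecker_rpow_mul hA hZ, add_halves, add_halves]
    have h := smul_mul_add_smul_mul_le_mul (posDef_rpow_kronecker_rpow hA hZ (s / 2) (t / 2))
      (posDef_rpow_kronecker_rpow hA₁ hZ₁ (s / 2) (t / 2))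
      (posDef_rpow_kronecker_rpow hA₂ hZ₂ (s / 2) (t / 2))
      (posDef_rpow_kronecker_rpow hA hZ (s' / 2) (t' / 2)).posSemidef
      (posDef_rpow_kronecker_rpow hA₁ hZ₁ (s' / 2) (t' / 2)).isHermitian
      (posDef_rpow_kronecker_rpow hA₂ hZ₂ (s' / 2) (t' / 2)).isHermitian
      (commute_rpow_kronecker_rpow hA hZ ..) (commute_rpow_kronecker_rpow hA₁ hZ₁ ..)
      (commute_rpow_kronecker_rpow hA₂ hZ₂ ..) ha hb
      (by rwa [hsq hA hZ, hsq hA₁ hZ₁, hsq hA₂ hZ₂])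
      (by rwa [hsq hA hZ, hsq hA₁ hZ₁, hsq hA₂ hZ₂])
    simp only [rpow_kronecker_rpow_mul, hA, hA₁, hA₂, hZ, hZ₁, hZ₂] at h
    simpa [midpoint_eq_smul_add, mul_add, ← div_eq_inv_mul, add_div] using h

theorem concaveOn_rpow_kronecker_rpow {s t : ℝ} (hs : 0 ≤ s) (ht : 0 ≤ t) (hst : s + t ≤ 1) :
    ConcaveOn ℝ ({A : Matrix m m ℂ | A.PosDef} ×ˢ {Z : Matrix n n ℂ | Z.PosDef})
      fun p ↦ (p.1 ^ s) ⊗ₖ (p.2 ^ t) := by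
  refine ⟨convex_setOf_posDef.prod convex_setOf_posDef, ?_⟩
  rintro ⟨A₁, Z₁⟩ ⟨hA₁ : A₁.PosDef, hZ₁ : Z₁.PosDef⟩ ⟨A₂, Z₂⟩
    ⟨hA₂ : A₂.PosDef, hZ₂ : Z₂.PosDef⟩ a b ha hb hab
  have hA : (a • A₁ + b • A₂).PosDef := convex_setOf_posDef hA₁ hA₂ ha hb hab
  have hZ : (a • Z₁ + b • Z₂).PosDef := convex_setOf_posDef hZ₁ hZ₂ ha hb hab
  set C : Set (ℝ × ℝ) := {p | a • ((A₁ ^ p.1) ⊗ₖ (Z₁ ^ p.2)) + b • ((A₂ ^ p.1) ⊗ₖ (Z₂ ^ p.2)) ≤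
    ((a • A₁ + b • A₂) ^ p.1) ⊗ₖ ((a • Z₁ + b • Z₂) ^ p.2)}
  have hC : Convex ℝ C := convex_setOf_smul_rpow_kronecker_rpow_le hA₁ hA₂ hA hZ₁ hZ₂ hZ ha hb
  have h00 : (0, 0) ∈ C := by
    simp only [C, Set.mem_ofPred_eq, CFC.rpow_zero _ hA.posSemidef.nonneg,
      CFC.rpow_zero _ hA₁.posSemidef.nonneg, CFC.rpow_zero _ hA₂.posSemidef.nonneg,
      CFC.rpow_zero _ hZ.posSemidef.nonneg, CFC.rpow_zero _ hZ₁.posSemidef.nonneg,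
      CFC.rpow_zero _ hZ₂.posSemidef.nonneg, ← add_smul, hab, one_smul, le_refl]
  have h10 : (1, 0) ∈ C := by
    simp only [C, Set.mem_ofPred_eq, CFC.rpow_one _ hA.posSemidef.nonneg,
      CFC.rpow_one _ hA₁.posSemidef.nonneg, CFC.rpow_one _ hA₂.posSemidef.nonneg,
      CFC.rpow_zero _ hZ.posSemidef.nonneg, CFC.rpow_zero _ hZ₁.posSemidef.nonneg,
      CFC.rpow_zero _ hZ₂.posSemidef.nonneg, ← smul_kronecker, ← add_kronecker, le_refl]
  have h01 : (0, 1) ∈ C := by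
    simp only [C, Set.mem_ofPred_eq, CFC.rpow_zero _ hA.posSemidef.nonneg,
      CFC.rpow_zero _ hA₁.posSemidef.nonneg, CFC.rpow_zero _ hA₂.posSemidef.nonneg,
      CFC.rpow_one _ hZ.posSemidef.nonneg, CFC.rpow_one _ hZ₁.posSemidef.nonneg,
      CFC.rpow_one _ hZ₂.posSemidef.nonneg, ← kronecker_smul, ← kronecker_add, le_refl]
  have h : (s, t) ∈ C := by
    simpa [Fin.sum_univ_three] using hC.sum_mem (t := Finset.univ) (w := ![1 - s - t, s, t])
      (z := ![((0 : ℝ), (0 : ℝ)), (1, 0), (0, 1)])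
      (by simpa [Fin.forall_fin_succ, hs, ht] using by linarith)
      (by simp [Fin.sum_univ_three]; ring) (by simp [Fin.forall_fin_succ, h00, h10, h01])
  exact h

lemma trace_conjTranspose_mul_rpow_mul_rpow {A : Matrix m m ℂ} {Z : Matrix n n ℂ} (hA : A.PosDef)
    (hZ : Z.PosDef) (B : Matrix m n ℂ) (s t : ℝ) :
    (Bᴴ * A ^ (-s) * B * Z ^ (-t)).trace =
      ((replicateCol Unit (vec B))ᴴ * ((Zᵀ ^ t) ⊗ₖ (A ^ s))⁻¹ *
        replicateCol Unit (vec B)).trace := by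
  rw [inv_kronecker, inv_rpow_eq_rpow_neg hA, inv_rpow_eq_rpow_neg hZ.transpose,
    ← transpose_rpow hZ.posSemidef, Matrix.mul_assoc _ _ (replicateCol _ _),
    ← replicateCol_mulVec, kronecker_mulVec_vec,
    transpose_transpose, conjTranspose_replicateCol, trace_mul_comm (replicateRow _ _),
    trace_replicateCol_mul_replicateRow, dotProduct_comm, star_vec_dotProduct_vec]
  simp only [Matrix.mul_assoc]

theorem convexOn_trace_conjTranspose_mul_rpow_mul_rpow {s t : ℝ} (hs : 0 ≤ s) (ht : 0 ≤ t)
    (hst : s + t ≤ 1) :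
    ConvexOn ℝ (({A : Matrix m m ℂ | A.PosDef} ×ˢ Set.univ) ×ˢ {Z : Matrix n n ℂ | Z.PosDef})
      fun p : (Matrix m m ℂ × Matrix m n ℂ) × Matrix n n ℂ ↦
        (p.1.2ᴴ * p.1.1 ^ (-s) * p.1.2 * p.2 ^ (-t)).trace.re := by
  refine ⟨(convex_setOf_posDef.prod convex_univ).prod convex_setOf_posDef, ?_⟩
  rintro ⟨⟨A₁, B₁⟩, Z₁⟩ ⟨⟨hA₁ : A₁.PosDef, -⟩, hZ₁ : Z₁.PosDef⟩
    ⟨⟨A₂, B₂⟩, Z₂⟩ ⟨⟨hA₂ : A₂.PosDef, -⟩, hZ₂ : Z₂.PosDef⟩ a b ha hb hab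
  have hA : (a • A₁ + b • A₂).PosDef := convex_setOf_posDef hA₁ hA₂ ha hb hab
  have hZ : (a • Z₁ + b • Z₂).PosDef := convex_setOf_posDef hZ₁ hZ₂ ha hb hab
  have hconc := (concaveOn_rpow_kronecker_rpow ht hs (by rwa [add_comm])).2
    (Set.mk_mem_prod hZ₁.transpose hA₁) (Set.mk_mem_prod hZ₂.transpose hA₂) ha hb hab
  have hkiefer := conjTranspose_mul_inv_mul_le (posDef_rpow_kronecker_rpow hZ₁.transpose hA₁ t s)
    (posDef_rpow_kronecker_rpow hZ₂.transpose hA₂ t s)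
    (posDef_rpow_kronecker_rpow hZ.transpose hA t s)
    (replicateCol Unit (vec B₁)) (replicateCol Unit (vec B₂)) ha hb hconc
  have htrace := re_trace_mono hkiefer
  simp only [← replicateCol_smul, ← replicateCol_add, ← vec_smul, ← vec_add, trace_add,
    trace_smul, Complex.add_re, Complex.smul_re] at htrace
  simp only [← trace_conjTranspose_mul_rpow_mul_rpow, hA, hZ, hA₁, hZ₁, hA₂, hZ₂] at htrace
  exact htrace

end AndoLieb

lemma rpow_le_mul_mul_rpow_add_mul {y z q : ℝ} (hy : 0 ≤ y) (hz : 0 < z) (hq0 : 0 < q)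
    (hq1 : q ≤ 1) : y ^ q ≤ q * (y * z ^ (1 - 1 / q)) + (1 - q) * z := by
  have hexp : (1 - 1 / q) * q + (1 - q) = 0 := by field_simp; ring
  calc y ^ q = (y * z ^ (1 - 1 / q)) ^ q * z ^ (1 - q) := by
        rw [Real.mul_rpow hy (Real.rpow_nonneg hz.le _), ← Real.rpow_mul hz.le, mul_assoc,
          ← Real.rpow_add hz, hexp, Real.rpow_zero, mul_one]
    _ ≤ q * (y * z ^ (1 - 1 / q)) + (1 - q) * z :=
        Real.geom_mean_le_arith_mean2_weighted hq0.le (sub_nonneg.2 hq1)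
          (mul_nonneg hy (Real.rpow_nonneg hz.le _)) hz.le (add_sub_cancel _ _)

section Variational

variable {m : Type*} [Fintype m] [DecidableEq m]

lemma re_trace_cfc_mul_cfc {Y Z : Matrix m m ℂ} (hY : Y.IsHermitian) (hZ : Z.IsHermitian)
    (f g : ℝ → ℝ) :
    (cfc f Y * cfc g Z).trace.re = ∑ i, ∑ j, f (hY.eigenvalues i) * g (hZ.eigenvalues j) *
      Complex.normSq (inner ℂ (hY.eigenvectorBasis i) (hZ.eigenvectorBasis j)) := by
  set U := (hY.eigenvectorUnitary : Matrix m m ℂ)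
  set V := (hZ.eigenvectorUnitary : Matrix m m ℂ)
  have htrace : (cfc f Y * cfc g Z).trace =
      (diagonal (fun i ↦ (f (hY.eigenvalues i) : ℂ)) * (star U * V) *
        diagonal (fun j ↦ (g (hZ.eigenvalues j) : ℂ)) * (star U * V)ᴴ).trace := by
    rw [hY.cfc_eq, hZ.cfc_eq, IsHermitian.cfc, IsHermitian.cfc, Unitary.conjStarAlgAut_apply,
      Unitary.conjStarAlgAut_apply, Matrix.mul_assoc, Matrix.mul_assoc, trace_mul_comm,
      conjTranspose_mul, ← star_eq_conjTranspose, ← star_eq_conjTranspose, star_star]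
    simp only [Matrix.mul_assoc]
    rfl
  have hinner (i j : m) :
      (star U * V) i j = inner ℂ (hY.eigenvectorBasis i) (hZ.eigenvectorBasis j) := by
    simp only [mul_apply, star_apply, U, V, IsHermitian.eigenvectorUnitary_apply, PiLp.inner_apply,
      RCLike.inner_apply, starRingEnd_apply, mul_comm]
  rw [htrace, trace, Complex.re_sum]
  refine Finset.sum_congr rfl fun i _ ↦ ?_
  rw [diag_apply, mul_apply, Complex.re_sum]
  refine Finset.sum_congr rfl fun j _ ↦ ?_
  rw [mul_diagonal, diagonal_mul, conjTranspose_apply, hinner, mul_right_comm (f _ : ℂ),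
    mul_assoc, ← starRingEnd_apply, Complex.mul_conj, ← Complex.ofReal_mul, ← Complex.ofReal_mul,
    Complex.ofReal_re]

lemma re_trace_rpow_le {Y Z : Matrix m m ℂ} (hY : Y.PosSemidef) (hZ : Z.PosDef) {q : ℝ}
    (hq0 : 0 < q) (hq1 : q ≤ 1) :
    (Y ^ q).trace.re ≤ q * (Y * Z ^ (1 - 1 / q)).trace.re + (1 - q) * Z.trace.re := by
  have hYZ := re_trace_cfc_mul_cfc hY.isHermitian hZ.isHermitian
  have hYq : Y ^ q = cfc (· ^ q : ℝ → ℝ) Y * cfc (fun _ : ℝ ↦ (1 : ℝ)) Z := by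
    rw [cfc_const_one ℝ Z, mul_one, CFC.rpow_eq_cfc_real hY.nonneg]
  have hYZr : Y * Z ^ (1 - 1 / q) = cfc (fun y : ℝ ↦ y) Y * cfc (· ^ (1 - 1 / q) : ℝ → ℝ) Z := by
    rw [cfc_id' ℝ Y, CFC.rpow_eq_cfc_real hZ.posSemidef.nonneg]
  have hZ1 : Z = cfc (fun _ : ℝ ↦ (1 : ℝ)) Y * cfc (fun z : ℝ ↦ z) Z := by
    rw [cfc_const_one ℝ Y, one_mul, cfc_id' ℝ Z]
  conv_rhs => enter [2, 2]; rw [hZ1]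
  rw [hYq, hYZr, hYZ, hYZ, hYZ, Finset.mul_sum, Finset.mul_sum, ← Finset.sum_add_distrib]
  refine Finset.sum_le_sum fun i _ ↦ ?_
  rw [Finset.mul_sum, Finset.mul_sum, ← Finset.sum_add_distrib]
  refine Finset.sum_le_sum fun j _ ↦ ?_
  have hyoung :=
    rpow_le_mul_mul_rpow_add_mul (hY.eigenvalues_nonneg i) (hZ.eigenvalues_pos j) hq0 hq1
  set w := Complex.normSq
    (inner ℂ (hY.isHermitian.eigenvectorBasis i) (hZ.isHermitian.eigenvectorBasis j))
  have := mul_le_mul_of_nonneg_right hyoung (Complex.normSq_nonneg _ : 0 ≤ w)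
  linarith

lemma re_trace_mul_rpow_rpow_le {Y P : Matrix m m ℂ} (hP : P.PosDef) (hYP : Y ≤ P) {q : ℝ}
    (hq : q ≠ 0) : (Y * (P ^ q) ^ (1 - 1 / q)).trace.re ≤ (P ^ q).trace.re := by
  set C := P ^ ((q - 1) / 2)
  have hC : IsSelfAdjoint C := (posDef_rpow hP _).isHermitian
  have hpow : (P ^ q) ^ (1 - 1 / q) = C * C := by
    rw [CFC.rpow_rpow P q _ hq hP.isStrictlyPositive, ← CFC.rpow_add hP.isUnit, add_halves]
    congr 1
    field_simp
  have hPC : C * P * C = P ^ q := by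
    conv_lhs => enter [1, 2]; rw [← CFC.rpow_one P hP.posSemidef.nonneg]
    rw [← CFC.rpow_add hP.isUnit, ← CFC.rpow_add hP.isUnit]
    congr 1
    ring
  calc (Y * (P ^ q) ^ (1 - 1 / q)).trace.re = (C * Y * C).trace.re := by
        rw [hpow, ← Matrix.mul_assoc, trace_mul_comm, Matrix.mul_assoc]
    _ ≤ (C * P * C).trace.re := re_trace_mono (hC.conjugate_le_conjugate hYP)
    _ = (P ^ q).trace.re := by rw [hPC]

theorem isGLB_re_trace_rpow {Y : Matrix m m ℂ} (hY : Y.PosSemidef) {q : ℝ} (hq0 : 0 < q)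
    (hq1 : q ≤ 1) :
    IsGLB ((fun Z ↦ q * (Y * Z ^ (1 - 1 / q)).trace.re + (1 - q) * Z.trace.re) ''
      {Z : Matrix m m ℂ | Z.PosDef}) (Y ^ q).trace.re := by
  refine ⟨Set.forall_mem_image.2 fun Z hZ ↦ re_trace_rpow_le hY hZ hq0 hq1, fun x hx ↦ ?_⟩
  -- For singular `Y` the minimizer `Y ^ q` is not positive definite, so it is approximated.
  have hle {ε : ℝ} (hε : 0 < ε) : x ≤ ((Y + ε • 1) ^ q).trace.re := by
    have hYP : Y ≤ Y + ε • 1 := le_add_of_nonneg_right (smul_nonneg hε.le zero_le_one)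
    have hP : (Y + ε • (1 : Matrix m m ℂ)).PosDef :=
      PosDef.posSemidef_add hY (PosDef.one.smul hε)
    have hx := hx (Set.mem_image_of_mem _ (posDef_rpow hP q))
    linarith [mul_le_mul_of_nonneg_left (re_trace_mul_rpow_rpow_le hP hYP hq0.ne') hq0.le]
  have hcont : ContinuousOn (fun P : Matrix m m ℂ ↦ (P ^ q).trace.re) {P | 0 ≤ P} := by
    lift q to NNReal using hq0.le
    simp only [← CFC.nnrpow_eq_rpow hq0]
    exact (Complex.continuous_re.comp continuous_id.matrix_trace).comp_continuousOn
      (CFC.continuousOn_nnrpow q)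
  have hperturb : Filter.Tendsto (fun ε : ℝ ↦ Y + ε • (1 : Matrix m m ℂ))
      (nhdsWithin 0 (Set.Ioi 0)) (nhdsWithin Y {P | 0 ≤ P}) := by
    refine tendsto_nhdsWithin_iff.2 ⟨?_, ?_⟩
    · refine tendsto_nhdsWithin_of_tendsto_nhds ?_
      exact Continuous.tendsto' (by fun_prop) _ _ (by simp)
    · filter_upwards [self_mem_nhdsWithin] with ε hε
      exact add_nonneg hY.nonneg (smul_nonneg (le_of_lt hε) zero_le_one)
  exact ge_of_tendsto ((hcont Y hY.nonneg).tendsto.comp hperturb)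
    (Filter.eventually_of_mem self_mem_nhdsWithin fun ε ↦ hle)

end Variational

lemma convexOn_of_isGLB {E F : Type*} [AddCommGroup E] [Module ℝ E] [AddCommGroup F] [Module ℝ F]
    {S : Set E} {T : Set F} {g : E × F → ℝ} {f : E → ℝ} (hg : ConvexOn ℝ (S ×ˢ T) g)
    (hf : ∀ x ∈ S, IsGLB ((fun y ↦ g (x, y)) '' T) (f x)) : ConvexOn ℝ S f := by
  have hconv {x₁} (hx₁ : x₁ ∈ S) {x₂} (hx₂ : x₂ ∈ S) {y₁} (hy₁ : y₁ ∈ T) {y₂} (hy₂ : y₂ ∈ T)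
      {a b : ℝ} (ha : 0 ≤ a) (hb : 0 ≤ b) (hab : a + b = 1) :
      a • x₁ + b • x₂ ∈ S ∧ a • y₁ + b • y₂ ∈ T :=
    hg.1 (Set.mk_mem_prod hx₁ hy₁) (Set.mk_mem_prod hx₂ hy₂) ha hb hab
  refine ⟨fun x₁ hx₁ x₂ hx₂ a b ha hb hab ↦ ?_, fun x₁ hx₁ x₂ hx₂ a b ha hb hab ↦ ?_⟩
  · obtain ⟨y, hy⟩ : T.Nonempty := (hf x₁ hx₁).nonempty.of_image
    exact (hconv hx₁ hx₂ hy hy ha hb hab).1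
  refine le_of_forall_pos_le_add fun ε hε ↦ ?_
  obtain ⟨_, ⟨y₁, hy₁, rfl⟩, -, h₁⟩ := (hf x₁ hx₁).exists_between (lt_add_of_pos_right _ hε)
  obtain ⟨_, ⟨y₂, hy₂, rfl⟩, -, h₂⟩ := (hf x₂ hx₂).exists_between (lt_add_of_pos_right _ hε)
  obtain ⟨hx, hy⟩ := hconv hx₁ hx₂ hy₁ hy₂ ha hb hab
  calc f (a • x₁ + b • x₂) ≤ g (a • x₁ + b • x₂, a • y₁ + b • y₂) :=
        (hf _ hx).1 (Set.mem_image_of_mem _ hy)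
    _ ≤ a • g (x₁, y₁) + b • g (x₂, y₂) :=
        hg.2 (Set.mk_mem_prod hx₁ hy₁) (Set.mk_mem_prod hx₂ hy₂) ha hb hab
    _ ≤ a • (f x₁ + ε) + b • (f x₂ + ε) := by gcongr
    _ = a • f x₁ + b • f x₂ + ε := by
        linear_combination (norm := (simp only [smul_eq_mul]; ring)) ε * hab

theorem stmt18_general {m n : Type*} [Fintype m] [DecidableEq m] [Fintype n] [DecidableEq n]
    {s q : ℝ} (hs0 : 0 ≤ s) (hs1 : s ≤ 1) (hq0 : 1 / (2 - s) ≤ q) (hq1 : q ≤ 1) :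
    ConvexOn ℝ ({A : Matrix m m ℂ | A.PosDef} ×ˢ Set.univ)
      fun p : Matrix m m ℂ × Matrix m n ℂ ↦ ((p.2ᴴ * p.1 ^ (-s) * p.2) ^ q).trace.re := by
  have hq : 0 < q := (one_div_pos.2 (by linarith)).trans_le hq0
  have ht : 0 ≤ 1 / q - 1 := sub_nonneg.2 (one_le_one_div hq hq1)
  have hst : s + (1 / q - 1) ≤ 1 := by
    linarith [(one_div_le (by linarith) hq).1 hq0]
  have hlieb := (convexOn_trace_conjTranspose_mul_rpow_mul_rpow (m := m) (n := n) hs0 ht hst).smul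
    hq.le
  have htrace : ConvexOn ℝ
      (({A : Matrix m m ℂ | A.PosDef} ×ˢ Set.univ) ×ˢ {Z : Matrix n n ℂ | Z.PosDef})
      fun p : (Matrix m m ℂ × Matrix m n ℂ) × Matrix n n ℂ ↦ (1 - q) * p.2.trace.re :=
    ((1 - q) • Complex.reLm ∘ₗ traceLinearMap n ℝ ℂ ∘ₗ LinearMap.snd ℝ _ _).convexOn hlieb.1
  refine convexOn_of_isGLB (hlieb.add htrace) fun ⟨A, B⟩ ⟨(hA : A.PosDef), _⟩ ↦ ?_
  have hY := (posDef_rpow hA (-s)).posSemidef.conjTranspose_mul_mul_same B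
  simpa using isGLB_re_trace_rpow hY hq hq1

lemma mpow_eq_rpow {k : ℕ} {A : Matrix (Fin k) (Fin k) ℂ} (hA : A.PosSemidef) (p : ℝ) :
    mpow A p = A ^ p := by
  rw [mpow, dif_pos hA.isHermitian, CFC.rpow_eq_cfc_real hA.nonneg, hA.isHermitian.cfc_eq,
    IsHermitian.cfc, Unitary.conjStarAlgAut_apply, ← star_eq_conjTranspose]
  rfl

lemma mpow_conjTranspose_mul_mpow_mul {k : ℕ} {A : Matrix (Fin k) (Fin k) ℂ} (hA : A.PosDef)
    (B : Matrix (Fin k) (Fin k) ℂ) (p q : ℝ) :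
    mpow (Bᴴ * mpow A p * B) q = (Bᴴ * A ^ p * B) ^ q := by
  rw [mpow_eq_rpow hA.posSemidef, mpow_eq_rpow]
  exact (posDef_rpow hA p).posSemidef.conjTranspose_mul_mul_same B

end SpectralPowers

theorem stmt18 {n : ℕ} (s q : ℝ) (hs0 : 0 ≤ s) (hs1 : s < 1)
    (hq0 : 1 / (2 - s) ≤ q) (hq1 : q < 1)
    (A₁ A₂ : Matrix (Fin n) (Fin n) ℂ) (hA₁ : A₁.PosDef) (hA₂ : A₂.PosDef)
    (B₁ B₂ : Matrix (Fin n) (Fin n) ℂ)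
    (c : ℝ) (hc0 : 0 ≤ c) (hc1 : c ≤ 1) :
    (mpow (((c : ℂ) • B₁ + ((1 : ℂ) - (c : ℂ)) • B₂)ᴴ *
          mpow ((c : ℂ) • A₁ + ((1 : ℂ) - (c : ℂ)) • A₂) (-s) *
          ((c : ℂ) • B₁ + ((1 : ℂ) - (c : ℂ)) • B₂)) q).trace.re ≤
      c * (mpow (B₁ᴴ * mpow A₁ (-s) * B₁) q).trace.re +
        (1 - c) * (mpow (B₂ᴴ * mpow A₂ (-s) * B₂) q).trace.re := by
  have hA : (c • A₁ + (1 - c) • A₂).PosDef :=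
    convex_setOf_posDef hA₁ hA₂ hc0 (sub_nonneg.2 hc1) (add_sub_cancel c 1)
  simp only [← Complex.ofReal_one, ← Complex.ofReal_sub, Complex.coe_smul, hA, hA₁, hA₂,
    mpow_conjTranspose_mul_mpow_mul]
  exact (stmt18_general hs0 hs1.le hq0 hq1.le).2 (Set.mk_mem_prod hA₁ (Set.mem_univ B₁))
    (Set.mk_mem_prod hA₂ (Set.mem_univ B₂)) hc0 (sub_nonneg.2 hc1) (add_sub_cancel c 1)
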